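/- arXiv:2303.14057 — 2 statements merged into one kernel-verified Lean document; each statement's English description precedes it below -/
import Mathlib

section
/- Let b ≥ 1 and r ≥ 2 be integers, let O* = {(kr+1)b : k ≥ 0} and E* = {krb : k ≥ 1}, and let A ⊆ O* and B ⊆ E* with b ∈ A, such that for every k ≥ 1 with krb ∈ B, both (kr+1)b ∈ A and ((k-1)r+1)b ∈ A (i.e. A ∪ B is odd-ended in the stretched sense). Define (c_n) by (1 - Σ_{a∈A} x^a/a! + Σ_{m∈B} x^m/m!)^{-1} = Σ_{n≥0} c_n x^n/n! in ℚ[[x]]. Then c_n ≥ 0 for every n ≥ 0. -/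
open scoped Classical

/-!
Write `E` for the map `∑ vₙ xⁿ ↦ ∑ vₙ xⁿ / n!`, `S` for the left shift of coefficients, and
`W = 1 / f`. If `W` has nonnegative coefficients, then so has `Φ g = E (g f) / E f` for every `g`
with nonnegative coefficients: the constant term of `Φ g` is that of `g`, and, since `E` turns `S`
into `d/dx` and `S f = -f₀ (S W) f`,
`(Φ g)' = Φ (S g) + f₀ Φ (S W) (Φ g - g₀)`,
so each coefficient of `Φ g` is a nonnegative combination of earlier coefficients of such series.
Taking `g = W` shows that `1 / E f` has nonnegative coefficients.

It remains to treat the ordinary series `f = 1 - x Q + P`, where `x = X ^ b` and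
`x Q`, `P` are the generating functions of `A`, `B`. With
`N = 1 + x + ⋯ + x ^ s` one has `N f = 1 - H`, where
`H = (x ^ (s + 1) Q - P) + (N - 1) (Q - (1 + P))`, so `1 / f = N / (1 - H)`; both summands of `H`
have nonnegative coefficients because the index set is odd-ended.
-/

open PowerSeries

section NonnegCoeffs

variable {R : Type*} [Semiring R] [PartialOrder R] [IsOrderedRing R]

lemma coeff_mul_nonneg {f g : R⟦X⟧} {n : ℕ} (hf : ∀ i ≤ n, 0 ≤ coeff i f)
    (hg : ∀ i ≤ n, 0 ≤ coeff i g) : 0 ≤ coeff n (f * g) := by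
  rw [coeff_mul]
  exact Finset.sum_nonneg fun p hp => mul_nonneg
    (hf _ (Finset.HasAntidiagonal.antidiagonal.fst_le hp))
    (hg _ (Finset.HasAntidiagonal.antidiagonal.snd_le hp))

variable (R) in
/-- The semiring of power series all of whose coefficients are nonnegative. The coefficientwise
order `g ≤ f` is expressed as `f - g ∈ nonnegCoeffs R`. -/
def nonnegCoeffs : Subsemiring R⟦X⟧ where
  carrier := {f | ∀ n, 0 ≤ coeff n f}
  mul_mem' hf hg _ := coeff_mul_nonneg (fun i _ => hf i) (fun i _ => hg i)
  one_mem' n := by rw [coeff_one]; split_ifs <;> simp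
  add_mem' hf hg n := by rw [map_add]; exact add_nonneg (hf n) (hg n)
  zero_mem' n := by simp

lemma mem_nonnegCoeffs {f : R⟦X⟧} : f ∈ nonnegCoeffs R ↔ ∀ n, 0 ≤ coeff n f := Iff.rfl

lemma X_mem_nonnegCoeffs : (X : R⟦X⟧) ∈ nonnegCoeffs R := fun n => by
  rw [coeff_X]; split_ifs <;> simp

end NonnegCoeffs

section CoeffShift

variable {R : Type*} [Semiring R]

/-- The left shift `∑ aₙ xⁿ ↦ ∑ aₙ₊₁ xⁿ` of the coefficients, the ordinary counterpart of the
derivative of an exponential generating function. -/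
noncomputable def coeffShift (f : R⟦X⟧) : R⟦X⟧ := PowerSeries.mk fun n => coeff (n + 1) f

@[simp]
lemma coeff_coeffShift (f : R⟦X⟧) (n : ℕ) : coeff n (coeffShift f) = coeff (n + 1) f :=
  coeff_mk _ _

lemma eq_X_mul_coeffShift_add_C (f : R⟦X⟧) : f = X * coeffShift f + C (constantCoeff f) :=
  eq_X_mul_shift_add_const f

lemma coeffShift_mul (g f : R⟦X⟧) :
    coeffShift (g * f) = coeffShift g * f + constantCoeff g • coeffShift f := by
  ext n
  have expand : g * f = X * (coeffShift g * f) + C (constantCoeff g) * f := by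
    conv_lhs => rw [eq_X_mul_coeffShift_add_C g, add_mul, mul_assoc]
  rw [coeff_coeffShift, expand, map_add, coeff_succ_X_mul, coeff_C_mul, map_add, coeff_smul,
    coeff_coeffShift, smul_eq_mul]

lemma coeffShift_mem_nonnegCoeffs [PartialOrder R] [IsOrderedRing R] {f : R⟦X⟧}
    (hf : f ∈ nonnegCoeffs R) : coeffShift f ∈ nonnegCoeffs R := fun n => by
  rw [coeff_coeffShift]
  exact hf (n + 1)

lemma coeffShift_eq_of_mul_eq_one {R : Type*} [CommRing R] {W f : R⟦X⟧} (h : W * f = 1) :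
    coeffShift f = -(constantCoeff f • (coeffShift W * f)) := by
  have shift_one : coeffShift W * f + constantCoeff W • coeffShift f = 0 := by
    rw [← coeffShift_mul, h]
    ext n
    simp [coeff_one]
  have const_mul : constantCoeff f * constantCoeff W = 1 := by
    rw [mul_comm, ← map_mul, h, map_one]
  rw [eq_neg_of_add_eq_zero_left shift_one, smul_neg, neg_neg, smul_smul, const_mul, one_smul]

end CoeffShift

section BorelTransform

variable {K : Type*} [Field K]

/-- The formal Borel transform `∑ aₙ xⁿ ↦ ∑ aₙ xⁿ / n!`, which turns the ordinary generating
function of a sequence into its exponential generating function. -/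
noncomputable def borelTransform : K⟦X⟧ →ₗ[K] K⟦X⟧ where
  toFun f := PowerSeries.mk fun n => coeff n f / n.factorial
  map_add' f g := by ext n; simp [add_div]
  map_smul' a f := by ext n; simp [mul_div_assoc]

@[simp]
lemma coeff_borelTransform (f : K⟦X⟧) (n : ℕ) :
    coeff n (borelTransform f) = coeff n f / n.factorial :=
  coeff_mk n fun n => coeff n f / (n.factorial : K)

@[simp]
lemma constantCoeff_borelTransform (f : K⟦X⟧) :
    constantCoeff (borelTransform f) = constantCoeff f := by
  simp [← coeff_zero_eq_constantCoeff_apply, -coeff_zero_eq_constantCoeff]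

@[simp]
lemma borelTransform_one : borelTransform (1 : K⟦X⟧) = 1 := by
  ext n
  by_cases hn : n = 0 <;> simp [coeff_one, hn]

lemma derivative_borelTransform [CharZero K] (f : K⟦X⟧) :
    d⁄dX K (borelTransform f) = borelTransform (coeffShift f) := by
  ext n
  have : (n.factorial : K) ≠ 0 := by exact_mod_cast n.factorial_ne_zero
  have : (n + 1 : K) ≠ 0 := by exact_mod_cast n.succ_ne_zero
  rw [coeff_derivative, coeff_borelTransform, coeff_borelTransform, coeff_coeffShift,
    Nat.factorial_succ]
  push_cast
  field_simp

/-- The operator `g ↦ E (g f) / E f` attached to a power series `f`, where `E` is the Borel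
transform. It is of use when `f` has nonzero constant term (otherwise it is the junk value `0`), and
then sends `1` to `1` and `1 / f` to `1 / E f`. -/
noncomputable def borelQuotient (f g : K⟦X⟧) : K⟦X⟧ :=
  borelTransform (g * f) * (borelTransform f)⁻¹

lemma constantCoeff_borelQuotient {f : K⟦X⟧} (hf : constantCoeff f ≠ 0) (g : K⟦X⟧) :
    constantCoeff (borelQuotient f g) = constantCoeff g := by
  simp [borelQuotient, hf]

lemma borelQuotient_inv {f : K⟦X⟧} (hf : constantCoeff f ≠ 0) :
    borelQuotient f f⁻¹ = (borelTransform f)⁻¹ := by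
  rw [borelQuotient, PowerSeries.inv_mul_cancel f hf, borelTransform_one, one_mul]

lemma derivative_borelQuotient [CharZero K] {f : K⟦X⟧} (hf : constantCoeff f ≠ 0) (g : K⟦X⟧) :
    d⁄dX K (borelQuotient f g) = borelQuotient f (coeffShift g) +
      constantCoeff f • (borelQuotient f (coeffShift f⁻¹) *
        (borelQuotient f g - C (constantCoeff g))) := by
  have shift_f := coeffShift_eq_of_mul_eq_one (PowerSeries.inv_mul_cancel f hf)
  have deriv_f : d⁄dX K (borelTransform f) =
      -(C (constantCoeff f) * borelTransform (coeffShift f⁻¹ * f)) := by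
    rw [derivative_borelTransform, shift_f, map_neg, map_smul, smul_eq_C_mul]
  have deriv_gf : d⁄dX K (borelTransform (g * f)) = borelTransform (coeffShift g * f) +
      C (constantCoeff g) * d⁄dX K (borelTransform f) := by
    rw [derivative_borelTransform, derivative_borelTransform, coeffShift_mul, map_add, map_smul,
      smul_eq_C_mul]
  simp only [borelQuotient, Derivation.leibniz, derivative_inv', deriv_gf, deriv_f, smul_eq_mul,
    smul_eq_C_mul]
  ring

variable [LinearOrder K] [IsStrictOrderedRing K]

lemma borelQuotient_mem_nonnegCoeffs {f g : K⟦X⟧} (hf : constantCoeff f ≠ 0)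
    (hW : f⁻¹ ∈ nonnegCoeffs K) (hg : g ∈ nonnegCoeffs K) :
    borelQuotient f g ∈ nonnegCoeffs K := by
  have hf0 : 0 ≤ constantCoeff f := by
    have := hW 0
    rwa [coeff_zero_eq_constantCoeff_apply, constantCoeff_inv, inv_nonneg] at this
  have hSW := coeffShift_mem_nonnegCoeffs hW
  intro n
  induction n using Nat.strong_induction_on generalizing g with
  | _ n ih =>
    rcases n with _ | n
    · simpa [constantCoeff_borelQuotient hf] using hg 0
    have ih_sub : ∀ i ≤ n, 0 ≤ coeff i (borelQuotient f g - C (constantCoeff g)) := by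
      rintro (_ | i) hi
      · simp [constantCoeff_borelQuotient hf]
      · simpa [coeff_C] using ih (i + 1) (by omega) hg
    have deriv_nonneg : 0 ≤ coeff n (d⁄dX K (borelQuotient f g)) := by
      rw [derivative_borelQuotient hf, map_add, coeff_smul]
      exact add_nonneg (ih n n.lt_succ_self (coeffShift_mem_nonnegCoeffs hg))
        (mul_nonneg hf0 (coeff_mul_nonneg (fun i hi => ih i (Nat.lt_succ_of_le hi) hSW) ih_sub))
    rw [coeff_derivative] at deriv_nonneg
    exact nonneg_of_mul_nonneg_left deriv_nonneg (by positivity)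

theorem inv_borelTransform_mem_nonnegCoeffs {f : K⟦X⟧} (hf : constantCoeff f ≠ 0)
    (hW : f⁻¹ ∈ nonnegCoeffs K) : (borelTransform f)⁻¹ ∈ nonnegCoeffs K :=
  borelQuotient_inv hf ▸ borelQuotient_mem_nonnegCoeffs hf hW hW

end BorelTransform

section OrdinaryReciprocal

variable {K : Type*} [Field K] [LinearOrder K] [IsStrictOrderedRing K]

lemma inv_one_sub_mem_nonnegCoeffs {H : K⟦X⟧} (hH : H ∈ nonnegCoeffs K)
    (hH0 : constantCoeff H = 0) : (1 - H)⁻¹ ∈ nonnegCoeffs K := by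
  have recurrence : (1 - H)⁻¹ = 1 + X * (coeffShift H * (1 - H)⁻¹) := by
    have H_eq : H = X * coeffShift H := by
      simpa [hH0] using eq_X_mul_coeffShift_add_C H
    have inv_mul := PowerSeries.mul_inv_cancel (1 - H) (by simp [hH0])
    linear_combination inv_mul + (1 - H)⁻¹ * H_eq
  intro n
  induction n using Nat.strong_induction_on with
  | _ n ih =>
    rcases n with _ | n
    · simp [hH0]
    rw [recurrence, map_add, coeff_succ_X_mul]
    exact add_nonneg (one_mem (nonnegCoeffs K) _)
      (coeff_mul_nonneg (fun i _ => coeffShift_mem_nonnegCoeffs hH i)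
        fun i hi => ih i (Nat.lt_succ_of_le hi))

lemma inv_one_sub_mul_add_mem_nonnegCoeffs {x P Q : K⟦X⟧} (s : ℕ) (hx : x ∈ nonnegCoeffs K)
    (hx0 : constantCoeff x = 0) (hP0 : constantCoeff P = 0)
    (hPQ : Q - (1 + P) ∈ nonnegCoeffs K) (hPxQ : x ^ (s + 1) * Q - P ∈ nonnegCoeffs K) :
    (1 - x * Q + P)⁻¹ ∈ nonnegCoeffs K := by
  set M := x * ∑ i ∈ Finset.range s, x ^ i with hM
  set H := x ^ (s + 1) * Q - P + M * (Q - (1 + P)) with hH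
  have M_mem : M ∈ nonnegCoeffs K := mul_mem hx (sum_mem fun i _ => pow_mem hx i)
  have H_const : constantCoeff H = 0 := by simp [hH, hM, hx0, hP0]
  have mul_eq : (1 + M) * (1 - x * Q + P) = 1 - H := by
    linear_combination x * Q * mul_neg_geom_sum x s
  have inv_eq : (1 - x * Q + P)⁻¹ = (1 + M) * (1 - H)⁻¹ := by
    rw [inv_eq_iff_mul_eq_one (by simp [hx0, hP0]), mul_right_comm, mul_eq,
      PowerSeries.mul_inv_cancel _ (by simp [H_const])]
  rw [inv_eq]
  exact mul_mem (add_mem (one_mem _) M_mem)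
    (inv_one_sub_mem_nonnegCoeffs (add_mem hPxQ (mul_mem M_mem hPQ)) H_const)

end OrdinaryReciprocal

section IndicatorSeries

variable (R : Type*) [Semiring R]

/-- The ordinary generating function `∑_{n ∈ A} xⁿ` of a set `A` of natural numbers. -/
noncomputable def indicatorSeries (A : Set ℕ) : R⟦X⟧ :=
  PowerSeries.mk fun n => if n ∈ A then 1 else 0

@[simp]
lemma coeff_indicatorSeries (A : Set ℕ) (n : ℕ) :
    coeff n (indicatorSeries R A) = if n ∈ A then 1 else 0 :=
  coeff_mk _ _

lemma indicatorSeries_insert_zero {B : Set ℕ} (hB : 0 ∉ B) :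
    indicatorSeries R (insert 0 B) = 1 + indicatorSeries R B := by
  ext n
  by_cases hn : n = 0 <;> simp [coeff_one, hn, hB, -coeff_zero_eq_constantCoeff]

lemma indicatorSeries_image_add (k : ℕ) (Q : Set ℕ) :
    indicatorSeries R (Q.image (· + k)) = X ^ k * indicatorSeries R Q := by
  ext n
  rw [coeff_X_pow_mul', coeff_indicatorSeries, coeff_indicatorSeries]
  by_cases hk : k ≤ n
  · obtain ⟨m, rfl⟩ := Nat.exists_eq_add_of_le' hk
    simp
  · have notMem_image : n ∉ Q.image (· + k) := by
      rintro ⟨m, -, rfl⟩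
      exact hk (Nat.le_add_left k m)
    rw [if_neg notMem_image, if_neg hk]

@[simp]
lemma constantCoeff_indicatorSeries (A : Set ℕ) :
    constantCoeff (indicatorSeries R A) = if 0 ∈ A then 1 else 0 :=
  (coeff_zero_eq_constantCoeff_apply _).symm.trans (coeff_indicatorSeries R A 0)

lemma indicatorSeries_sub_mem_nonnegCoeffs (R : Type*) [Ring R] [PartialOrder R]
    [IsOrderedRing R] {A B : Set ℕ} (h : B ⊆ A) :
    indicatorSeries R A - indicatorSeries R B ∈ nonnegCoeffs R := by
  intro n
  rw [map_sub, coeff_indicatorSeries, coeff_indicatorSeries, sub_nonneg]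
  by_cases hn : n ∈ B
  · simp [hn, h hn]
  · simp only [hn, if_false]
    split_ifs <;> simp

end IndicatorSeries

section StretchedOdds

lemma le_of_eq_stretched_odd {b r a : ℕ} (h : ∃ k : ℕ, a = (k * r + 1) * b) : b ≤ a := by
  obtain ⟨k, rfl⟩ := h
  exact Nat.le_mul_of_pos_left b (Nat.succ_pos _)

lemma eq_add_of_stretched_odd_ended {b r m : ℕ} (hr : 1 ≤ r) {A B : Set ℕ}
    (hOE : ∀ k : ℕ, 1 ≤ k → k * r * b ∈ B →
      (k * r + 1) * b ∈ A ∧ ((k - 1) * r + 1) * b ∈ A)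
    (hm : m ∈ B) (hB : ∃ k : ℕ, 1 ≤ k ∧ m = k * r * b) :
    m + b ∈ A ∧ ∃ a ∈ A, m = a + (r - 1) * b := by
  obtain ⟨k, hk, rfl⟩ := hB
  obtain ⟨h_succ, h_pred⟩ := hOE k hk hm
  refine ⟨by rwa [← Nat.succ_mul], _, h_pred, ?_⟩
  obtain ⟨k, rfl⟩ := Nat.exists_eq_add_of_le' hk
  obtain ⟨r, rfl⟩ := Nat.exists_eq_add_of_le' hr
  simp only [Nat.add_sub_cancel]
  ring

end StretchedOdds

section OddEnded

variable {K : Type*} [Field K]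

lemma mk_div_factorial_eq_borelTransform (A B : Set ℕ) :
    (PowerSeries.mk fun n =>
        (if n = 0 then (1 : K) else 0)
        - (if n ∈ A then (1 : K) / n.factorial else 0)
        + (if n ∈ B then (1 : K) / n.factorial else 0))
      = borelTransform (1 - indicatorSeries K A + indicatorSeries K B) := by
  ext n
  by_cases hn : n = 0 <;>
    simp [coeff_one, hn, ite_div, -coeff_zero_eq_constantCoeff]

lemma zero_notMem_of_forall_eq_add {b s : ℕ} (hb : 1 ≤ b) {A B : Set ℕ} (hA : ∀ a ∈ A, b ≤ a)
    (hB : ∀ m ∈ B, ∃ a ∈ A, m = a + s * b) : 0 ∉ B := fun h => by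
  obtain ⟨a, ha, h0⟩ := hB 0 h
  have := hA a ha
  omega

variable [LinearOrder K] [IsStrictOrderedRing K]

variable (K) in
lemma inv_one_sub_indicatorSeries_add_mem_nonnegCoeffs {b s : ℕ} (hb : 1 ≤ b) {A B : Set ℕ}
    (hA : ∀ a ∈ A, b ≤ a) (hbA : b ∈ A)
    (hB : ∀ m ∈ B, m + b ∈ A ∧ ∃ a ∈ A, m = a + s * b) :
    (1 - indicatorSeries K A + indicatorSeries K B)⁻¹ ∈ nonnegCoeffs K := by
  set Q : Set ℕ := {n | n + b ∈ A} with hQ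
  have zero_notMem : 0 ∉ B := zero_notMem_of_forall_eq_add hb hA fun m hm => (hB m hm).2
  have A_eq : A = Q.image (· + b) := by
    ext a
    refine ⟨fun ha => ⟨a - b, ?_, Nat.sub_add_cancel (hA a ha)⟩, fun ⟨_, hq, h⟩ => h ▸ hq⟩
    simpa [hQ, Nat.sub_add_cancel (hA a ha)] using ha
  have B_subset : B ⊆ Q.image (· + b * (s + 1)) := by
    intro m hm
    obtain ⟨-, a, ha, rfl⟩ := hB m hm
    obtain ⟨q, hq, rfl⟩ := A_eq ▸ ha
    exact ⟨q, hq, by ring⟩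
  have insert_subset : insert 0 B ⊆ Q :=
    Set.insert_subset (by simpa [hQ] using hbA) fun m hm => (hB m hm).1
  rw [A_eq, indicatorSeries_image_add]
  refine inv_one_sub_mul_add_mem_nonnegCoeffs s (pow_mem X_mem_nonnegCoeffs b) ?_ ?_ ?_ ?_
  · simp [Nat.ne_of_gt hb]
  · simp [zero_notMem]
  · rw [← indicatorSeries_insert_zero K zero_notMem]
    exact indicatorSeries_sub_mem_nonnegCoeffs K insert_subset
  · rw [← pow_mul, ← indicatorSeries_image_add]
    exact indicatorSeries_sub_mem_nonnegCoeffs K B_subset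

theorem stmt1_general {b s : ℕ} (hb : 1 ≤ b) {A B : Set ℕ}
    (hA : ∀ a ∈ A, b ≤ a) (hbA : b ∈ A)
    (hB : ∀ m ∈ B, m + b ∈ A ∧ ∃ a ∈ A, m = a + s * b) {c : ℕ → K}
    (hc : (PowerSeries.mk fun n =>
          (if n = 0 then (1 : K) else 0)
          - (if n ∈ A then (1 : K) / n.factorial else 0)
          + (if n ∈ B then (1 : K) / n.factorial else 0))⁻¹
        = PowerSeries.mk fun n => c n / n.factorial) (n : ℕ) :
    0 ≤ c n := by
  have zero_notMem_A : 0 ∉ A := fun h => absurd (hA 0 h) (by omega)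
  have zero_notMem_B : 0 ∉ B := zero_notMem_of_forall_eq_add hb hA fun m hm => (hB m hm).2
  have inv_mem := inv_borelTransform_mem_nonnegCoeffs (by simp [zero_notMem_A, zero_notMem_B])
    (inv_one_sub_indicatorSeries_add_mem_nonnegCoeffs K hb hA hbA hB)
  rw [← mk_div_factorial_eq_borelTransform, hc, mem_nonnegCoeffs] at inv_mem
  have div_factorial_nonneg : 0 ≤ c n / n.factorial := by simpa only [coeff_mk] using inv_mem n
  simpa using (le_div_iff₀ (by positivity)).mp div_factorial_nonneg

end OddEnded

/-- stretched version. For `b ≥ 1`, `r ≥ 2`, `A` a subset of the stretched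
odds `{(kr+1)b : k ≥ 0}` containing `b`, `B` a subset of the stretched evens `{krb : k ≥ 1}`,
with `A ∪ B` odd-ended in the stretched sense, the coefficients `c n` of the reciprocal of
`1 - ∑_{a ∈ A} x^a/a! + ∑_{m ∈ B} x^m/m!`, written as `∑ c_n x^n/n!`, are all nonnegative. -/
theorem stmt1 (b r : ℕ) (hb : 1 ≤ b) (hr : 2 ≤ r)
    (A B : Set ℕ)
    (hA : ∀ a ∈ A, ∃ k : ℕ, a = (k * r + 1) * b)
    (hB : ∀ m ∈ B, ∃ k : ℕ, 1 ≤ k ∧ m = k * r * b)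
    (hbA : b ∈ A)
    (hOE : ∀ k : ℕ, 1 ≤ k → k * r * b ∈ B →
      (k * r + 1) * b ∈ A ∧ ((k - 1) * r + 1) * b ∈ A)
    (c : ℕ → ℚ)
    (hc : (PowerSeries.mk fun n =>
          (if n = 0 then (1 : ℚ) else 0)
          - (if n ∈ A then (1 : ℚ) / n.factorial else 0)
          + (if n ∈ B then (1 : ℚ) / n.factorial else 0))⁻¹
        = PowerSeries.mk fun n => c n / n.factorial) :
    ∀ n, 0 ≤ c n := by
  exact stmt1_general hb (fun a ha => le_of_eq_stretched_odd (hA a ha)) hbA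
    (fun m hm => eq_add_of_stretched_odd_ended (by omega) hOE hm (hB m hm)) hc
end

section
/- Let r ≥ 2 be an integer. Define (c_n) by (Σ_{k≥0} (x^{kr}/(kr)! - x^{kr+1}/(kr+1)!))^{-1} = Σ_{n≥0} c_n x^n/n! in ℚ[[x]], i.e. the reciprocal of 1 - x + x^r/r! - x^{r+1}/(r+1)! + x^{2r}/(2r)! - x^{2r+1}/(2r+1)! + ⋯. Then for every n ≥ 0, c_n equals the number of permutations of {1, ..., n} all of whose maximal increasing runs have length at most r - 1. -/
/-- The list of lengths of the maximal increasing runs (read left to right) of the word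
`σ(1) σ(2) ⋯ σ(n)` associated to a permutation `σ` of `{1, ..., n}`. -/
def runLengths {n : ℕ} (σ : Equiv.Perm (Fin n)) : List ℕ :=
  ((List.ofFn fun i => σ i).splitBy fun a b => decide (a < b)).map List.length

/-!
Let `∑ vₙ xⁿ` be the reciprocal of `∑ wₙ xⁿ`, where `w₀ = 1`, and weight a word by the product of
the `w`'s of its run lengths. Cut a word after an increasing prefix of length `k`, and weight the
cut word by `vₖ` times the weight of the remaining factor. For a nonempty word with first run of
length `m`, the sum over all cuts is a multiple of `∑ k ≤ m, vₖ wₘ₋ₖ = 0`. An increasing prefix is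
determined by the set of its letters, so summing over all permutations of an `n`-element set gives
`∑ k, (n choose k) vₖ Nₙ₋ₖ = 0` for `n ≥ 1`, where `Nₙ` is the total weight of the permutations.
Hence `∑ Nₙ xⁿ / n!` is the reciprocal of `∑ vₙ xⁿ / n!` (Gessel's run theorem). The weights
`wₙ = 1` for `n < r` and `wₙ = 0` otherwise give `∑ vₙ xⁿ = (1 - x) / (1 - xʳ)`.
-/

open Finset PowerSeries
open scoped Nat

section Words

variable {α β R : Type*}

theorem splitBy_map (f : α → β) (p : β → β → Bool) (l : List α) :
    (l.map f).splitBy p = (l.splitBy fun a b => p (f a) (f b)).map (List.map f) := by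
  obtain ⟨hflatten, -, hchain, hbreak⟩ :=
    List.splitBy_eq_iff.1 (rfl : l.splitBy (fun a b => p (f a) (f b)) = _)
  refine List.splitBy_eq_iff.2 ⟨?_, by simp, ?_, ?_⟩
  · rw [← List.map_flatten, ← hflatten]
  · simpa [List.isChain_map] using hchain
  · simpa [List.isChain_map, List.getLast_map, List.head_map] using hbreak

section FirstRun

variable [LT α]

theorem exists_eq_append_of_maximal_increasing_prefix {l : List α} (hl : l ≠ []) :
    ∃ u v, l = u ++ v ∧ u ≠ [] ∧ u.IsChain (· < ·) ∧
      ∀ x ∈ u.getLast?, ∀ y ∈ v.head?, ¬ x < y := by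
  induction l with
  | nil => exact absurd rfl hl
  | cons a l ih =>
    rcases l with _ | ⟨b, l⟩
    · exact ⟨[a], [], by simp⟩
    by_cases hab : a < b
    · obtain ⟨_ | ⟨c, u⟩, v, happend, hu, hinc, hbreak⟩ := ih (by simp)
      · exact absurd rfl hu
      obtain ⟨rfl, rfl⟩ := List.cons.inj happend
      exact ⟨a :: b :: u, v, rfl, by simp, hinc.cons_cons hab, by simpa using hbreak⟩
    · exact ⟨[a], b :: l, by simp [hab]⟩

theorem isChain_take_append_iff {u v : List α} (hu : u ≠ []) (hinc : u.IsChain (· < ·))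
    (hbreak : ∀ x ∈ u.getLast?, ∀ y ∈ v.head?, ¬ x < y) {k : ℕ} (hk : k ≤ (u ++ v).length) :
    ((u ++ v).take k).IsChain (· < ·) ↔ k ≤ u.length := by
  refine ⟨fun h => ?_, fun h => List.take_append_of_le_length h ▸ hinc.take k⟩
  by_contra! hlt
  rw [List.take_append, List.take_of_length_le hlt.le, List.isChain_append] at h
  rcases v with _ | ⟨y, v⟩
  · exact hlt.not_ge (by simpa using hk)
  · obtain ⟨j, hj⟩ := Nat.exists_eq_add_of_lt hlt
    exact hbreak _ (List.getLast_mem_getLast? hu) y (by simp)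
      (h.2.2 _ (List.getLast_mem_getLast? hu) y (by simp [hj, add_assoc]))

end FirstRun

variable [LT α] [DecidableLT α] [LT β] [DecidableLT β]

/-- The lengths of the maximal increasing runs of a word, so that
`runLengths σ = wordRunLengths (List.ofFn σ)` for a permutation `σ`. -/
def wordRunLengths (l : List α) : List ℕ :=
  (l.splitBy fun a b => decide (a < b)).map List.length

theorem wordRunLengths_append {u v : List α} (hu : u ≠ []) (hinc : u.IsChain (· < ·))
    (hbreak : ∀ x ∈ u.getLast?, ∀ y ∈ v.head?, ¬ x < y) :
    wordRunLengths (u ++ v) = u.length :: wordRunLengths v := by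
  rw [wordRunLengths, List.splitBy_append (by simpa using hbreak),
    List.splitBy_of_isChain hu (by simpa using hinc)]
  rfl

theorem wordRunLengths_map {f : α → β} (hf : ∀ a b, f a < f b ↔ a < b) (l : List α) :
    wordRunLengths (l.map f) = wordRunLengths l := by
  simp [wordRunLengths, splitBy_map, hf, Function.comp_def]

/-- The product over the maximal increasing runs of a word of the weights `w` of their lengths. -/
def runWeight [Semiring R] (w : ℕ → R) (l : List α) : R :=
  ((wordRunLengths l).map w).prod

variable [Semiring R] {v w : ℕ → R}

theorem runWeight_drop_append (hw : w 0 = 1) {u t : List α} (hinc : u.IsChain (· < ·))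
    (hbreak : ∀ x ∈ u.getLast?, ∀ y ∈ t.head?, ¬ x < y) {k : ℕ} (hk : k ≤ u.length) :
    runWeight w ((u ++ t).drop k) = w (u.length - k) * runWeight w t := by
  rw [List.drop_append_of_le_length hk]
  obtain rfl | hlt := hk.eq_or_lt
  · simp [hw]
  · rw [runWeight, wordRunLengths_append (by simpa using hlt) (hinc.drop k)]
    · simp [runWeight]
    · rwa [List.getLast?_drop, if_neg (by omega)]

theorem sum_mul_apply_sub_of_mk_mul_mk_eq_one (hvw : mk v * mk w = 1) (n : ℕ) :
    ∑ k ∈ range (n + 1), v k * w (n - k) = if n = 0 then 1 else 0 := by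
  simpa [coeff_mul, coeff_one, Nat.sum_antidiagonal_eq_sum_range_succ_mk] using
    congrArg (coeff n) hvw

theorem sum_increasing_prefix_mul_runWeight_drop (hw : w 0 = 1) (hvw : mk v * mk w = 1)
    (l : List α) :
    ∑ k ∈ range (l.length + 1) with (l.take k).IsChain (· < ·), v k * runWeight w (l.drop k) =
      if l.length = 0 then 1 else 0 := by
  obtain rfl | hl := eq_or_ne l []
  · simpa [runWeight, wordRunLengths, hw] using sum_mul_apply_sub_of_mk_mul_mk_eq_one hvw 0
  obtain ⟨u, t, rfl, hu, hinc, hbreak⟩ := exists_eq_append_of_maximal_increasing_prefix hl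
  have hprefix : {k ∈ range ((u ++ t).length + 1) | ((u ++ t).take k).IsChain (· < ·)} =
      range (u.length + 1) := by
    ext k
    have hlen : (u ++ t).length = u.length + t.length := List.length_append
    simp only [mem_filter, mem_range, Nat.lt_succ_iff]
    exact ⟨fun h => (isChain_take_append_iff hu hinc hbreak h.1).1 h.2, fun h =>
      ⟨by omega, (isChain_take_append_iff hu hinc hbreak (by omega)).2 h⟩⟩
  calc
    _ = ∑ k ∈ range (u.length + 1), v k * w (u.length - k) * runWeight w t := by
      rw [hprefix]
      refine sum_congr rfl fun k hk => ?_
      rw [runWeight_drop_append hw hinc hbreak (mem_range_succ_iff.1 hk), mul_assoc]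
    _ = _ := by
      rw [← sum_mul, sum_mul_apply_sub_of_mk_mul_mk_eq_one hvw]
      simp [hu]

end Words

section Arrangements

variable {α M : Type*}

/-- The words in which every element of the finite set `S` occurs exactly once, and no other
letter occurs. -/
def arrangements (S : Finset α) : Finset (List α) :=
  ⟨S.val.lists, Multiset.lists_nodup_finset S⟩

theorem mem_arrangements {S : Finset α} {l : List α} :
    l ∈ arrangements S ↔ (l : Multiset α) = S.val := by
  simp [arrangements, Finset.mem_def, eq_comm]

theorem length_of_mem_arrangements {S : Finset α} {l : List α} (hl : l ∈ arrangements S) :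
    l.length = #S := by
  simpa using congrArg Multiset.card (mem_arrangements.1 hl)

theorem nodup_of_mem_arrangements {S : Finset α} {l : List α} (hl : l ∈ arrangements S) :
    l.Nodup :=
  Multiset.coe_nodup.1 (mem_arrangements.1 hl ▸ S.nodup)

theorem card_arrangements (S : Finset α) : #(arrangements S) = (#S)! := by
  rw [arrangements, Finset.card_mk, ← Finset.coe_toList S, Multiset.lists_coe, Multiset.coe_card,
    List.length_permutations, Finset.length_toList]

theorem sum_arrangements_map [AddCommMonoid M] {n : ℕ} (e : Fin n ↪ α) (f : List α → M) :
    ∑ l ∈ arrangements (univ.map e), f l =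
      ∑ σ : Equiv.Perm (Fin n), f ((List.ofFn σ).map e) := by
  classical
  have hinj : Function.Injective fun σ : Equiv.Perm (Fin n) => (List.ofFn σ).map e :=
    e.injective.list_map.comp (List.ofFn_injective.comp DFunLike.coe_injective)
  have himage : univ.image (fun σ : Equiv.Perm (Fin n) => (List.ofFn σ).map e) =
      arrangements (univ.map e) := by
    refine eq_of_subset_of_card_le (fun l hl => ?_) ?_
    · obtain ⟨σ, -, rfl⟩ := mem_image.1 hl
      rw [mem_arrangements, ← Multiset.map_coe, ← Fin.univ_val_map, Finset.map_val]
      exact congrArg (fun s : Finset (Fin n) => s.val.map e) (univ_map_equiv_to_embedding σ)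
    · rw [card_image_of_injective _ hinj, card_arrangements]
      simp [Fintype.card_perm]
  rw [← himage, sum_image hinj.injOn]

variable [LinearOrder α] {S T : Finset α} {l : List α}

theorem sort_append_mem_arrangements (hT : T ⊆ S) (hl : l ∈ arrangements (S \ T)) :
    T.sort ++ l ∈ arrangements S := by
  rw [mem_arrangements] at hl ⊢
  rw [← Multiset.coe_add, hl, sort_eq, sdiff_val, add_tsub_cancel_of_le (val_le_iff.2 hT)]

theorem drop_mem_arrangements (hl : l ∈ arrangements S) (k : ℕ) :
    l.drop k ∈ arrangements (S \ (l.take k).toFinset) := by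
  have hnodup : (l.take k).Nodup := (nodup_of_mem_arrangements hl).sublist (l.take_sublist k)
  have hsplit : (l.take k : Multiset α) + l.drop k = S.val := by
    rw [Multiset.coe_add, List.take_append_drop, mem_arrangements.1 hl]
  rw [mem_arrangements, sdiff_val, ← hsplit, List.toFinset_val, hnodup.dedup,
    add_tsub_cancel_left]

theorem sum_powerset_sum_arrangements_sdiff [AddCommMonoid M] (S : Finset α)
    (f : ℕ → List α → M) :
    ∑ T ∈ S.powerset, ∑ l ∈ arrangements (S \ T), f #T l =
      ∑ l ∈ arrangements S, ∑ k ∈ range (l.length + 1) with (l.take k).IsChain (· < ·),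
        f k (l.drop k) := by
  rw [sum_sigma', sum_sigma']
  refine sum_bij' (fun p _ => ⟨p.1.sort ++ p.2, #p.1⟩)
    (fun q _ => ⟨(q.1.take q.2).toFinset, q.1.drop q.2⟩) ?_ ?_ ?_ ?_ ?_
  · rintro ⟨T, l⟩ h
    obtain ⟨hT, hl⟩ := mem_sigma.1 h
    simp only [mem_sigma, mem_filter, mem_range]
    refine ⟨sort_append_mem_arrangements (mem_powerset.1 hT) hl, ?_, ?_⟩
    · simp
    · rw [List.take_left' (by simp)]
      exact T.sortedLT_sort.isChain
  · rintro ⟨l, k⟩ h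
    have hl := (mem_sigma.1 h).1
    refine mem_sigma.2 ⟨mem_powerset.2 fun x hx => ?_, drop_mem_arrangements hl k⟩
    have hxl : x ∈ (l : Multiset α) := List.mem_of_mem_take (List.mem_toFinset.1 hx)
    rwa [mem_arrangements.1 hl] at hxl
  · rintro ⟨T, l⟩ -
    simp [List.take_left', List.drop_left']
  · rintro ⟨l, k⟩ h
    simp only [mem_sigma, mem_filter, mem_range, Nat.lt_succ_iff] at h
    obtain ⟨hl, hk, hinc⟩ := h
    have hnodup : (l.take k).Nodup := (nodup_of_mem_arrangements hl).sublist (l.take_sublist k)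
    have hsort : (l.take k).toFinset.sort = l.take k :=
      (List.toFinset_sort (r := (· ≤ ·)) hnodup).2 (hinc.pairwise.imp le_of_lt)
    simp [hsort, List.toFinset_card_of_nodup hnodup, hk]
  · rintro ⟨T, l⟩ -
    simp

end Arrangements

section RunSums

variable {α R : Type*} [Semiring R] {v w : ℕ → R}

/-- The total weight of the permutations of an `n`-element set, each weighted by the product of
the weights `w` of its run lengths. -/
def runSum (w : ℕ → R) (n : ℕ) : R :=
  ∑ σ : Equiv.Perm (Fin n), ((runLengths σ).map w).prod

theorem sum_arrangements_runWeight [LinearOrder α] (w : ℕ → R) (S : Finset α) :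
    ∑ l ∈ arrangements S, runWeight w l = runSum w #S := by
  let e : Fin #S ↪o α := S.orderEmbOfFin rfl
  calc
    _ = ∑ l ∈ arrangements (univ.map e.toEmbedding), runWeight w l := by
      rw [map_orderEmbOfFin_univ]
    _ = ∑ σ : Equiv.Perm (Fin #S), runWeight w ((List.ofFn σ).map e) :=
      sum_arrangements_map e.toEmbedding _
    _ = runSum w #S := sum_congr rfl fun σ _ => by
      rw [runWeight, wordRunLengths_map fun _ _ => e.lt_iff_lt]
      rfl

theorem sum_choose_nsmul_mul_runSum (hw : w 0 = 1) (hvw : mk v * mk w = 1) (n : ℕ) :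
    ∑ k ∈ range (n + 1), n.choose k • (v k * runSum w (n - k)) = if n = 0 then 1 else 0 := by
  let S : Finset (Fin n) := univ
  have hS : #S = n := card_fin n
  calc
    _ = ∑ T ∈ S.powerset, v #T * runSum w (n - #T) := by
      rw [sum_powerset_apply_card fun k => v k * runSum w (n - k), hS]
    _ = ∑ T ∈ S.powerset, ∑ l ∈ arrangements (S \ T), v #T * runWeight w l := by
      refine sum_congr rfl fun T hT => ?_
      rw [← mul_sum, sum_arrangements_runWeight, card_sdiff_of_subset (mem_powerset.1 hT), hS]
    _ = ∑ l ∈ arrangements S, ∑ k ∈ range (l.length + 1) with (l.take k).IsChain (· < ·),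
          v k * runWeight w (l.drop k) :=
      sum_powerset_sum_arrangements_sdiff S fun k l => v k * runWeight w l
    _ = ∑ l ∈ arrangements S, if n = 0 then 1 else 0 := by
      refine sum_congr rfl fun l hl => ?_
      rw [sum_increasing_prefix_mul_runWeight_drop hw hvw, length_of_mem_arrangements hl, hS]
    _ = if n = 0 then 1 else 0 := by
      rw [sum_const, card_arrangements, hS]
      split_ifs with hn <;> simp [hn]

theorem prod_map_ite_one_zero {ι M₀ : Type*} [MonoidWithZero M₀] (p : ι → Prop) [DecidablePred p]
    (l : List ι) :
    (l.map fun i => if p i then (1 : M₀) else 0).prod = if ∀ i ∈ l, p i then 1 else 0 := by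
  induction l with
  | nil => simp
  | cons a l ih => by_cases ha : p a <;> simp [ha, ih]

theorem card_forall_runLengths_eq_runSum (p : ℕ → Prop) [DecidablePred p] (n : ℕ) :
    (Nat.card {σ : Equiv.Perm (Fin n) // ∀ l ∈ runLengths σ, p l} : R) =
      runSum (fun l => if p l then 1 else 0) n := by
  rw [Nat.card_eq_fintype_card, Fintype.card_subtype, runSum]
  simp only [prod_map_ite_one_zero, sum_boole]

end RunSums

section GeneratingFunctions

variable {K : Type*} [Field K]

/-- The exponential generating function `∑ aₙ xⁿ / n!` of a sequence `a`. -/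
def egf (a : ℕ → K) : K⟦X⟧ :=
  mk fun n => a n / n !

variable [CharZero K]

theorem egf_injective : Function.Injective (egf : (ℕ → K) → K⟦X⟧) := by
  intro a b h
  funext n
  have hn : a n / n ! = b n / n ! := by simpa [egf] using congrArg (coeff n) h
  exact (div_left_inj' (Nat.cast_ne_zero.2 n.factorial_ne_zero)).1 hn

theorem egf_mul_egf (a b : ℕ → K) :
    egf a * egf b = egf fun n => ∑ k ∈ range (n + 1), n.choose k • (a k * b (n - k)) := by
  ext n
  simp only [egf, coeff_mul, coeff_mk, Nat.sum_antidiagonal_eq_sum_range_succ_mk, sum_div]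
  refine sum_congr rfl fun k hk => ?_
  have hn : (n ! : K) ≠ 0 := Nat.cast_ne_zero.2 n.factorial_ne_zero
  rw [nsmul_eq_mul, Nat.cast_choose K (mem_range_succ_iff.1 hk)]
  field_simp

theorem egf_mul_egf_runSum {v w : ℕ → K} (hw : w 0 = 1) (hvw : mk v * mk w = 1) :
    egf v * egf (runSum w) = 1 := by
  rw [egf_mul_egf]
  ext n
  simp only [sum_choose_nsmul_mul_runSum hw hvw, egf, coeff_mk, coeff_one]
  split_ifs with hn <;> simp [hn]

theorem stmt14_general {v w c : ℕ → K} (hw : w 0 = 1) (hv : (mk w)⁻¹ = mk v)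
    (hc : (egf v)⁻¹ = egf c) (n : ℕ) :
    c n = ∑ σ : Equiv.Perm (Fin n), ((runLengths σ).map w).prod := by
  have hvw : mk v * mk w = 1 := by
    rw [← hv]
    exact PowerSeries.inv_mul_cancel _ (by simp [← coeff_zero_eq_constantCoeff_apply, hw])
  have hprod : egf v * egf (runSum w) = 1 := egf_mul_egf_runSum hw hvw
  have hconst : constantCoeff (egf v) ≠ 0 :=
    left_ne_zero_of_mul_eq_one (by simpa using congrArg constantCoeff hprod)
  have hegf : egf c = egf (runSum w) := by
    rw [← hc, eq_comm, PowerSeries.eq_inv_iff_mul_eq_one hconst, mul_comm, hprod]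
  exact congrFun (egf_injective hegf) n

end GeneratingFunctions

section BoundedRuns

/-- The coefficients of `(1 - x) / (1 - xʳ) = ∑ₖ (xᵏʳ - xᵏʳ⁺¹)`, for `2 ≤ r`. -/
def residueSign (R : Type*) [Ring R] (r n : ℕ) : R :=
  if n % r = 0 then 1 else if n % r = 1 then -1 else 0

theorem mk_lt_mul_one_sub_X {R : Type*} [Ring R] (r : ℕ) :
    (mk fun n => if n < r then (1 : R) else 0) * (1 - X) = 1 - X ^ r := by
  have hgeom : (mk fun n => if n < r then (1 : R) else 0) = ∑ i ∈ range r, X ^ i := by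
    ext n
    simp [coeff_X_pow]
  rw [hgeom, geom_sum_mul_neg]

theorem mk_residueSign_mul_one_sub_X_pow {R : Type*} [Ring R] {r : ℕ} (hr : 2 ≤ r) :
    mk (residueSign R r) * (1 - X ^ r) = 1 - X := by
  ext n
  rw [mul_sub, mul_one, map_sub, coeff_mul_X_pow', coeff_mk, map_sub, coeff_one, coeff_X]
  rcases lt_or_ge n r with hn | hn
  · simp only [residueSign, Nat.mod_eq_of_lt hn, hn.not_ge]
    rcases n with _ | _ | n <;> simp
  · have hmod : (n - r) % r = n % r := (Nat.mod_eq_sub_mod hn).symm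
    have h0 : n ≠ 0 := by omega
    have h1 : n ≠ 1 := by omega
    simp [residueSign, hmod, hn, h0, h1]

theorem inv_mk_lt_eq_mk_residueSign {K : Type*} [Field K] {r : ℕ} (hr : 2 ≤ r) :
    (mk fun n => if n < r then (1 : K) else 0)⁻¹ = mk (residueSign K r) := by
  have hX : (1 - X : K⟦X⟧) ≠ 0 := fun h => by simpa using congrArg constantCoeff h
  have hr0 : r ≠ 0 := by omega
  rw [PowerSeries.inv_eq_iff_mul_eq_one (by simp [← coeff_zero_eq_constantCoeff_apply, hr0])]
  refine mul_right_cancel₀ hX ?_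
  rw [mul_assoc, mk_lt_mul_one_sub_X, mk_residueSign_mul_one_sub_X_pow hr, one_mul]

theorem egf_residueSign {K : Type*} [Field K] (r : ℕ) :
    egf (residueSign K r) = mk fun n => if n % r = 0 then (1 : K) / n !
      else if n % r = 1 then -((1 : K) / n !) else 0 := by
  ext n
  simp only [egf, residueSign, coeff_mk]
  split_ifs <;> ring

end BoundedRuns

/-- David–Barton. For `r ≥ 2`, the coefficients `c n` of the reciprocal
of `∑_{k ≥ 0} (x^{kr}/(kr)! - x^{kr+1}/(kr+1)!)`, i.e. of
`1 - x + x^r/r! - x^{r+1}/(r+1)! + x^{2r}/(2r)! - ⋯`, written as `∑ cₙ xⁿ/n!`, count the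
permutations of `{1, ..., n}` all of whose maximal increasing runs have length at most
`r - 1`. -/
theorem stmt14 (r : ℕ) (hr : 2 ≤ r) (c : ℕ → ℚ)
    (hc : (PowerSeries.mk fun n =>
          if n % r = 0 then (1 : ℚ) / n.factorial
          else if n % r = 1 then -((1 : ℚ) / n.factorial)
          else 0)⁻¹
        = PowerSeries.mk fun n => c n / n.factorial) :
    ∀ n, c n = (Nat.card {σ : Equiv.Perm (Fin n) //
        ∀ l ∈ runLengths σ, l ≤ r - 1} : ℚ) := by
  intro n
  have hr0 : 0 < r := by omega
  simp only [Nat.le_sub_one_iff_lt hr0, card_forall_runLengths_eq_runSum]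
  exact stmt14_general (by simp [hr0]) (inv_mk_lt_eq_mk_residueSign hr)
    (by rwa [egf_residueSign]) n
end
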